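/- Let K be a field, Y a finite set of variables, L = K{{t}} the field of generalized power series over K, and P ⊂ K[Y] a prime ideal. Then there is an injective ring homomorphism L[Y]/P·L[Y] → (K[Y]/P){{t}} sending ∑_ν (∑_μ a_{νμ} t^μ) y^ν to ∑_μ (∑_ν a_{νμ} y^ν + P) t^μ. In particular P·L[Y] is a prime ideal of L[Y]. -/

import Mathlib

/-!
Write `A = K[Y]/P` and `L = K{{t}}`. The map `ψ : L[Y] → A{{t}}` is evaluation: coefficients in `L`
are mapped to `A{{t}}` coefficientwise and each variable goes to its class, as a constant series.

The kernel contains `P·L[Y]` because a polynomial `g ∈ K[Y]` is sent to the constant series of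
its class (`evalHahn_map_C`). Conversely, choose a `K`-linear section `s : A → K[Y]` of the quotient
map, which exists since `K` is a field. For every monomial, `y^ν - s([y^ν])` lies in `P`, so
`p = ∑ p_ν y^ν` is congruent modulo `P·L[Y]` to `q = ∑ p_ν s([y^ν])`. By linearity of `s`, the
`t^μ`-coefficient of the `y^l`-coefficient of `q` is the `y^l`-coefficient of `s` applied to the
`t^μ`-coefficient of `ψ p`. Hence `ψ p = 0` forces `q = 0`, and so `p ∈ P·L[Y]`.
Primality follows since `A{{t}}` is a domain.
-/

open MvPolynomial

/-- The ring homomorphism of Hahn series applying `f` to each coefficient. -/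
noncomputable def hahnMap {R S : Type*} [CommRing R] [CommRing S] (f : R →+* S) :
    HahnSeries ℝ R →+* HahnSeries ℝ S where
  toFun x := x.map f
  map_one' := by
    ext a
    by_cases h : a = 0 <;> simp [HahnSeries.coeff_one, h]
  map_zero' := by ext; simp
  map_add' x y := by ext; simp
  map_mul' x y := HahnSeries.map_mul (f : R →ₙ+* S)

theorem hahnMap_coeff {R S : Type*} [CommRing R] [CommRing S] (f : R →+* S) (x : HahnSeries ℝ R)
    (a : ℝ) : (hahnMap f x).coeff a = f (x.coeff a) := rfl

/-- The evaluation homomorphism `L[Y] → (K[Y]/P){{t}}` sending `X i` to its class, viewed as a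
constant series. -/
noncomputable def evalHahn {K Y : Type*} [Field K] (P : Ideal (MvPolynomial Y K)) :
    MvPolynomial Y (HahnSeries ℝ K) →+* HahnSeries ℝ (MvPolynomial Y K ⧸ P) :=
  eval₂Hom (hahnMap ((Ideal.Quotient.mk P).comp MvPolynomial.C))
    (fun i => HahnSeries.C (Ideal.Quotient.mk P (X i)))

theorem evalHahn_coeff {K Y : Type*} [Field K] (P : Ideal (MvPolynomial Y K))
    (p : MvPolynomial Y (HahnSeries ℝ K)) (μ : ℝ) :
    (evalHahn P p).coeff μ =
      Ideal.Quotient.mk P (∑ ν ∈ p.support, monomial ν ((p.coeff ν).coeff μ)) := by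
  rw [evalHahn, coe_eval₂Hom, eval₂_eq, HahnSeries.coeff_sum, map_sum]
  refine Finset.sum_congr rfl fun ν _ => ?_
  have h : ∏ i ∈ ν.support, (HahnSeries.C (Ideal.Quotient.mk P (X i)) :
      HahnSeries ℝ (MvPolynomial Y K ⧸ P)) ^ ν i
      = HahnSeries.C (Ideal.Quotient.mk P (∏ i ∈ ν.support, X i ^ ν i)) := by
    simp only [map_prod, map_pow]
  rw [h, monomial_eq, map_mul]
  exact HahnSeries.coeff_mul_single_zero

theorem evalHahn_map_C {K Y : Type*} [Field K] (P : Ideal (MvPolynomial Y K))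
    (g : MvPolynomial Y K) :
    evalHahn P (MvPolynomial.map (HahnSeries.C : K →+* HahnSeries ℝ K) g) =
      HahnSeries.C (Ideal.Quotient.mk P g) := by
  induction g using MvPolynomial.induction_on with
  | C r =>
    ext a
    by_cases ha : a = 0 <;> simp [evalHahn, hahnMap_coeff, ha]
  | add p q hp hq => simp only [map_add, hp, hq]
  | mul_X p i hp => simp only [map_mul, hp]; simp [evalHahn]

theorem mem_of_evalHahn_eq_zero {K Y : Type*} [Field K] (P : Ideal (MvPolynomial Y K))
    (p : MvPolynomial Y (HahnSeries ℝ K)) (hp : evalHahn P p = 0) :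
    p ∈ Ideal.map (MvPolynomial.map (HahnSeries.C : K →+* HahnSeries ℝ K)) P := by
  obtain ⟨s, hs⟩ := (Ideal.Quotient.mkₐ K P).toLinearMap.exists_rightInverse_of_surjective
    (LinearMap.range_eq_top.2 (Ideal.Quotient.mkₐ_surjective K P))
  have hs' (a : MvPolynomial Y K ⧸ P) : Ideal.Quotient.mk P (s a) = a := LinearMap.congr_fun hs a
  -- `m ν` is the chosen representative of the class of `y^ν`
  let m : (Y →₀ ℕ) → MvPolynomial Y K := fun ν => s (Ideal.Quotient.mk P (monomial ν 1))
  have hmon (ν : Y →₀ ℕ) (c : K) : c • m ν = s (Ideal.Quotient.mk P (monomial ν c)) := by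
    have : (monomial ν c : MvPolynomial Y K) = c • monomial ν 1 := by simp [smul_monomial]
    rw [this]
    exact (s.map_smul c _).symm
  have hq : ∑ ν ∈ p.support, MvPolynomial.C (p.coeff ν) *
      MvPolynomial.map (HahnSeries.C : K →+* HahnSeries ℝ K) (m ν) = 0 := by
    refine MvPolynomial.ext _ _ fun l => HahnSeries.ext (funext fun μ => ?_)
    have key : ∑ ν ∈ p.support, (p.coeff ν).coeff μ • m ν = 0 := by
      simp_rw [hmon]
      rw [← map_sum, ← map_sum, ← evalHahn_coeff, hp]
      simp
    have key' := congrArg (MvPolynomial.coeff l) key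
    rw [coeff_sum, HahnSeries.coeff_sum]
    rw [coeff_sum] at key'
    refine Eq.trans (Finset.sum_congr rfl fun ν _ => ?_) key'
    rw [coeff_C_mul, coeff_map, coeff_smul]
    exact HahnSeries.coeff_mul_single_zero
  have hdiff : p = ∑ ν ∈ p.support, MvPolynomial.C (p.coeff ν) *
      MvPolynomial.map (HahnSeries.C : K →+* HahnSeries ℝ K) (monomial ν 1 - m ν) := by
    simp_rw [map_sub, mul_sub, Finset.sum_sub_distrib]
    rw [hq, sub_zero]
    conv_lhs => rw [as_sum p]
    simp [C_mul_monomial]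
  rw [hdiff]
  refine Ideal.sum_mem _ fun ν _ => Ideal.mul_mem_left _ _ (Ideal.mem_map_of_mem _ ?_)
  rw [← Ideal.Quotient.eq, hs']

theorem isPrime_of_forall_eq_zero_iff {R S : Type*} [CommRing R] [CommRing S] [IsDomain S]
    (f : R →+* S) (I : Ideal R) (h : ∀ p, f p = 0 ↔ p ∈ I) : I.IsPrime := by
  have : I = RingHom.ker f := by
    ext p
    rw [RingHom.mem_ker, h]
  rw [this]
  exact RingHom.ker_isPrime f

theorem eq_zero_of_mem_map {R S T : Type*} [CommRing R] [CommRing S] [CommRing T]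
    (φ : T →+* R) (f : R →+* S) (I : Ideal T) (h : ∀ g ∈ I, f (φ g) = 0) (p : R)
    (hp : p ∈ I.map φ) : f p = 0 := by
  have : I.map φ ≤ RingHom.ker f := Ideal.map_le_iff_le_comap.2 h
  exact this hp

/-- For a prime ideal `P ⊂ K[Y]` there is a ring homomorphism
`L[Y] → (K[Y]/P){{t}}` (where `L = K{{t}}` is the field of generalized power series),
sending `∑_ν (∑_μ a_{νμ} t^μ) y^ν` to `∑_μ (∑_ν a_{νμ} y^ν + P) t^μ`, whose kernel is
exactly `P·L[Y]`; hence it induces an injective ring homomorphism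
`L[Y]/P·L[Y] → (K[Y]/P){{t}}`, and in particular `P·L[Y]` is a prime ideal. -/
theorem stmt_2 (K : Type*) [Field K] (Y : Type*) [Finite Y]
    (P : Ideal (MvPolynomial Y K)) (hP : P.IsPrime) :
    ∃ ψ : MvPolynomial Y (HahnSeries ℝ K) →+* HahnSeries ℝ (MvPolynomial Y K ⧸ P),
      (∀ (p : MvPolynomial Y (HahnSeries ℝ K)) (μ : ℝ),
        (ψ p).coeff μ =
          Ideal.Quotient.mk P (∑ ν ∈ p.support, monomial ν ((p.coeff ν).coeff μ))) ∧
      (∀ p : MvPolynomial Y (HahnSeries ℝ K), ψ p = 0 ↔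
        p ∈ Ideal.map (MvPolynomial.map (HahnSeries.C : K →+* HahnSeries ℝ K)) P) ∧
      (Ideal.map (MvPolynomial.map (HahnSeries.C : K →+* HahnSeries ℝ K)) P).IsPrime := by
  -- The rings are passed explicitly to the two lemmas below: unification does not recover their
  -- `CommRing` instances from the type of `evalHahn P`.
  have hker (p : MvPolynomial Y (HahnSeries ℝ K)) : evalHahn P p = 0 ↔
      p ∈ Ideal.map (MvPolynomial.map (HahnSeries.C : K →+* HahnSeries ℝ K)) P := by
    refine ⟨mem_of_evalHahn_eq_zero P p, fun h => ?_⟩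
    refine eq_zero_of_mem_map (R := MvPolynomial Y (HahnSeries ℝ K))
      (S := HahnSeries ℝ (MvPolynomial Y K ⧸ P)) (T := MvPolynomial Y K)
      (MvPolynomial.map HahnSeries.C) (evalHahn P) P (fun g hg => ?_) p h
    rw [evalHahn_map_C, Ideal.Quotient.eq_zero_iff_mem.2 hg, map_zero]
  exact ⟨evalHahn P, evalHahn_coeff P, hker, isPrime_of_forall_eq_zero_iff
    (R := MvPolynomial Y (HahnSeries ℝ K)) (S := HahnSeries ℝ (MvPolynomial Y K ⧸ P))
    (evalHahn P) _ hker⟩
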